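/- arXiv:1105.4527 — 6 statements merged into one kernel-verified Lean document; each statement's English description precedes it below -/
import Mathlib

section
/- Let X be a topological space and let U be a subset of X × X. Then the following are equivalent: (1) there exists a continuous map s : U → C([0,1], X) (with C([0,1],X) carrying the compact-open topology) such that for every (x,y) ∈ U the path s(x,y) satisfies s(x,y)(0) = x and s(x,y)(1) = y (i.e., s is a continuous section over U of the fibration π : X^I → X × X, α ↦ (α(0), α(1))); (2) U is vertically compressible to the diagonal Δ(X). -/
/-! By the exponential law for the locally compact interval, a continuous family of paths
`Y → C(I, X)` from `f` to `g` is the same as a homotopy from `f` to `g`. A section of the path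
fibration over `U` is thus a homotopy from the first projection `U → X` to the second, whereas a
vertical compression is a homotopy from the second to the first; time reversal exchanges the
two. -/

open unitInterval

/-- A subset `U` of `X × X` is *vertically compressible to the diagonal* `Δ(X)` if there is a
continuous map `h : U × [0,1] → X` with `h((x,y),0) = y` and `h((x,y),1) = x` for all
`(x,y) ∈ U`. -/
def VerticallyCompressible {X : Type*} [TopologicalSpace X] (U : Set (X × X)) : Prop :=
  ∃ h : U × I → X, Continuous h ∧
    (∀ p : U, h (p, 0) = (p : X × X).2) ∧
    (∀ p : U, h (p, 1) = (p : X × X).1)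

section Homotopic

variable {X Y : Type*} [TopologicalSpace X] [TopologicalSpace Y]

theorem homotopic_iff_exists_continuous_prod_unitInterval (f g : C(Y, X)) :
    f.Homotopic g ↔
      ∃ h : Y × I → X, Continuous h ∧ (∀ y, h (y, 0) = f y) ∧ (∀ y, h (y, 1) = g y) := by
  constructor
  · rintro ⟨H⟩
    exact ⟨H ∘ Prod.swap, H.continuous.comp continuous_swap, H.apply_zero, H.apply_one⟩
  · rintro ⟨h, h_cont, h_zero, h_one⟩
    exact ⟨⟨⟨h ∘ Prod.swap, h_cont.comp continuous_swap⟩, h_zero, h_one⟩⟩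

theorem homotopic_iff_exists_continuous_path_family (f g : C(Y, X)) :
    f.Homotopic g ↔
      ∃ s : Y → C(I, X), Continuous s ∧ (∀ y, s y 0 = f y) ∧ (∀ y, s y 1 = g y) := by
  rw [homotopic_iff_exists_continuous_prod_unitInterval]
  constructor
  · rintro ⟨h, h_cont, h_zero, h_one⟩
    let H : C(Y × I, X) := ⟨h, h_cont⟩
    exact ⟨H.curry, H.curry.continuous, h_zero, h_one⟩
  · rintro ⟨s, s_cont, s_zero, s_one⟩
    exact ⟨fun q ↦ s q.1 q.2, ContinuousMap.continuous_uncurry_of_continuous ⟨s, s_cont⟩,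
      s_zero, s_one⟩

theorem verticallyCompressible_iff_homotopic_snd_fst (U : Set (X × X)) :
    VerticallyCompressible U ↔
      (ContinuousMap.snd.restrict U).Homotopic (ContinuousMap.fst.restrict U) :=
  (homotopic_iff_exists_continuous_prod_unitInterval
    (ContinuousMap.snd.restrict U) (ContinuousMap.fst.restrict U)).symm

end Homotopic

/-- For a subset `U ⊆ X × X`, the following are equivalent: (1) there is a continuous section
`s : U → C([0,1], X)` (compact-open topology) of the path fibration
`π : X^I → X × X, α ↦ (α 0, α 1)` over `U`; (2) `U` is vertically compressible to the
diagonal `Δ(X)`. -/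
theorem section_iff_verticallyCompressible {X : Type*} [TopologicalSpace X] (U : Set (X × X)) :
    (∃ s : U → C(I, X), Continuous s ∧
      (∀ p : U, s p 0 = (p : X × X).1) ∧ (∀ p : U, s p 1 = (p : X × X).2)) ↔
    VerticallyCompressible U := by
  let fst : C(U, X) := ContinuousMap.fst.restrict U
  let snd : C(U, X) := ContinuousMap.snd.restrict U
  calc
    _ ↔ fst.Homotopic snd := (homotopic_iff_exists_continuous_path_family fst snd).symm
    _ ↔ snd.Homotopic fst := ⟨fun H ↦ H.symm, fun H ↦ H.symm⟩
    _ ↔ VerticallyCompressible U := (verticallyCompressible_iff_homotopic_snd_fst U).symm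
end

section
/- Let X be a topological space which is the increasing union X = ⋃_{i=1}^∞ X_i of closed subspaces X_i ⊆ X_{i+1}, such that for each i there exists an open set Y_i ⊆ X with X_i ⊆ Y_i and cl(Y_i) ⊆ int(X_{i+1}) (closure and interior taken in X). Let n be a positive integer and suppose that for every i the space X_i × X_i can be covered by n sets U_1^{(i)}, …, U_n^{(i)}, each open in the subspace X_i × X_i, such that for each j there is a continuous map h_j^{(i)} : U_j^{(i)} × [0,1] → X_i with h_j^{(i)}((x,y),0) = y and h_j^{(i)}((x,y),1) = x (i.e., each U_j^{(i)} is vertically compressible to the diagonal of X_i within X_i × X_i). Then X × X can be covered by 2n open subsets W_1, …, W_{2n} of X × X, each of which is vertically compressible to the diagonal Δ(X). -/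
open unitInterval

/-!
The squares `S i = A i ×ˢ A i` exhaust `X × X`, and `closure (S i) ⊆ interior (S (i + 1))`. Hence
the open shells `interior (S i) \ ⋃ (k + 2 ≤ i), closure (S k)` cover `X × X`, and two of them are
disjoint as soon as their indices differ by at least two. Each shell inherits a compressible cover
by `n` sets from `A i × A i`. Compressions of disjoint open sets glue together, so `n` sets suffice
for all the shells of even index, and another `n` for those of odd index.
-/

open Function Set Topology

namespace VerticallyCompressible

variable {X Y : Type*} [TopologicalSpace X] [TopologicalSpace Y]

lemma mono {U V : Set (X × X)} (hV : VerticallyCompressible V) (hUV : U ⊆ V) :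
    VerticallyCompressible U := by
  obtain ⟨h, h_cont, h_zero, h_one⟩ := hV
  exact ⟨fun q => h (inclusion hUV q.1, q.2),
    h_cont.comp (((continuous_inclusion hUV).comp continuous_fst).prodMk continuous_snd),
    fun p => h_zero (inclusion hUV p), fun p => h_one (inclusion hUV p)⟩

lemma image {e : Y → X} (he : IsInducing e) {U : Set (Y × Y)} (hU : VerticallyCompressible U) :
    VerticallyCompressible (Prod.map e e '' U) := by
  obtain ⟨h, h_cont, h_zero, h_one⟩ := hU
  choose lift lift_mem map_lift using fun p : Prod.map e e '' U => p.2
  have lift_cont : Continuous lift :=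
    (he.prodMap he).continuous_iff.2 (continuous_subtype_val.congr fun p => (map_lift p).symm)
  refine ⟨fun q => e (h (⟨lift q.1, lift_mem q.1⟩, q.2)), ?_, fun p => ?_, fun p => ?_⟩
  · have := he.continuous
    fun_prop
  · exact (congrArg e (h_zero _)).trans (congrArg Prod.snd (map_lift p))
  · exact (congrArg e (h_one _)).trans (congrArg Prod.fst (map_lift p))

lemma iUnion_of_pairwise_disjoint {M : Type*} {V : M → Set (X × X)} (hVo : ∀ m, IsOpen (V m))
    (hVd : Pairwise (Disjoint on V)) (hV : ∀ m, VerticallyCompressible (V m)) :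
    VerticallyCompressible (⋃ m, V m) := by
  choose h h_cont h_zero h_one using hV
  let piece (m : M) : Set ((⋃ m, V m : Set (X × X)) × I) := {q | (q.1 : X × X) ∈ V m}
  have piece_nhds (q) : ∃ m, piece m ∈ 𝓝 q := by
    obtain ⟨m, hm⟩ := mem_iUnion.1 q.1.2
    exact ⟨m, ((hVo m).preimage (by fun_prop)).mem_nhds hm⟩
  let φ (m : M) : C(piece m, X) := ⟨fun q => h m (⟨q.1.1, q.2⟩, q.1.2), by
    have := h_cont m
    fun_prop⟩
  have φ_agree (a b : M) (q) (ha : q ∈ piece a) (hb : q ∈ piece b) :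
      φ a ⟨q, ha⟩ = φ b ⟨q, hb⟩ := by
    obtain rfl : a = b := hVd.eq (not_disjoint_iff.2 ⟨q.1, ha, hb⟩)
    rfl
  let glued := ContinuousMap.liftCover piece φ φ_agree piece_nhds
  have glued_apply (m : M) (q) (hq : q ∈ piece m) : glued q = h m (⟨q.1, hq⟩, q.2) :=
    ContinuousMap.liftCover_coe (hφ := φ_agree) (hS := piece_nhds) ⟨q, hq⟩
  refine ⟨glued, glued.continuous, fun p => ?_, fun p => ?_⟩ <;>
    obtain ⟨m, hm⟩ := mem_iUnion.1 p.2
  · rw [glued_apply m (p, 0) hm, h_zero]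
  · rw [glued_apply m (p, 1) hm, h_one]

end VerticallyCompressible

/-- `D` is the union of a family, indexed by `ι`, of open subsets of `X × X` that are vertically
compressible to the diagonal. For `D = univ` and `ι = Fin n` this says that the topological
complexity of `X` is at most `n`. -/
def HasCompressibleCover {X : Type*} [TopologicalSpace X] (ι : Type*) (D : Set (X × X)) : Prop :=
  ∃ U : ι → Set (X × X),
    (∀ j, IsOpen (U j)) ∧ ((⋃ j, U j) = D) ∧ ∀ j, VerticallyCompressible (U j)

namespace HasCompressibleCover

variable {X Y ι κ M : Type*} [TopologicalSpace X] [TopologicalSpace Y]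

lemma reindex {D : Set (X × X)} (hD : HasCompressibleCover ι D) (e : ι ≃ κ) :
    HasCompressibleCover κ D := by
  obtain ⟨U, hUo, hUD, hUv⟩ := hD
  exact ⟨U ∘ e.symm, fun k => hUo _, (e.symm.surjective.iUnion_comp U).trans hUD, fun k => hUv _⟩

lemma of_isInducing {e : Y → X} (he : IsInducing e)
    (hY : HasCompressibleCover ι (univ : Set (Y × Y))) {D : Set (X × X)} (hD : IsOpen D)
    (hDe : D ⊆ range (Prod.map e e)) : HasCompressibleCover ι D := by
  obtain ⟨U, hUo, hUc, hUv⟩ := hY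
  refine ⟨fun j => D ∩ Prod.map e e '' U j, fun j => ?_, ?_, fun j =>
    ((hUv j).image he).mono inter_subset_right⟩
  · obtain ⟨O, hO, hOU⟩ := (he.prodMap he).isOpen_iff.1 (hUo j)
    have : D ∩ Prod.map e e '' U j = D ∩ O := by
      rw [← hOU, image_preimage_eq_inter_range, inter_comm O, ← inter_assoc,
        inter_eq_left.2 hDe]
    simpa only [this] using hD.inter hO
  · rw [← inter_iUnion, ← image_iUnion, hUc, image_univ, inter_eq_left.2 hDe]

lemma iUnion_of_coloring {D : M → Set (X × X)} (c : M → κ)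
    (hc : Pairwise fun a b => c a = c b → Disjoint (D a) (D b))
    (hD : ∀ m, HasCompressibleCover ι (D m)) : HasCompressibleCover (κ × ι) (⋃ m, D m) := by
  choose U hUo hUD hUv using hD
  have hU_subset (m : M) (j : ι) : U m j ⊆ D m := hUD m ▸ subset_iUnion (U m) j
  refine ⟨fun k => ⋃ m : c ⁻¹' {k.1}, U m k.2, fun k => isOpen_iUnion fun m => hUo m k.2, ?_,
    fun k => .iUnion_of_pairwise_disjoint (fun m => hUo m k.2) ?_ fun m => hUv m k.2⟩
  · ext p
    simp only [← hUD, mem_iUnion, Prod.exists, Subtype.exists, mem_preimage, mem_singleton_iff]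
    exact ⟨fun ⟨_, j, m, _, hp⟩ => ⟨m, j, hp⟩, fun ⟨m, j, hp⟩ => ⟨c m, j, m, rfl, hp⟩⟩
  · intro a b hab
    exact (hc (Subtype.coe_ne_coe.2 hab) (a.2.trans b.2.symm)).mono (hU_subset a _) (hU_subset b _)

end HasCompressibleCover

/-- The `i`-th open shell of an exhaustion `S` of a space. Only the sets of index at most `i - 2`
are removed, so that consecutive shells overlap and the shells form an open cover. -/
def shell {Z : Type*} [TopologicalSpace Z] (S : ℕ → Set Z) (i : ℕ) : Set Z :=
  interior (S i) \ ⋃ k ∈ {k | k + 2 ≤ i}, closure (S k)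

section Shell

variable {Z : Type*} [TopologicalSpace Z] (S : ℕ → Set Z)

lemma isOpen_shell (i : ℕ) : IsOpen (shell S i) := by
  have hfin : {k | k + 2 ≤ i}.Finite := (finite_le_nat i).subset fun k (hk : k + 2 ≤ i) =>
    (Nat.le_add_right k 2).trans hk
  exact isOpen_interior.sdiff (hfin.isClosed_biUnion fun _ _ => isClosed_closure)

lemma shell_subset (i : ℕ) : shell S i ⊆ S i :=
  sdiff_subset.trans interior_subset

lemma disjoint_shell {i j : ℕ} (hij : i + 2 ≤ j) : Disjoint (shell S i) (shell S j) :=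
  disjoint_left.2 fun _ hi hj =>
    hj.2 (mem_biUnion (x := i) hij (subset_closure (shell_subset S i hi)))

lemma disjoint_shell_of_modEq_two {i j : ℕ} (hne : i ≠ j) (hmod : i ≡ j [MOD 2]) :
    Disjoint (shell S i) (shell S j) := by
  have hgap : i + 2 ≤ j ∨ j + 2 ≤ i := by
    rw [Nat.ModEq] at hmod
    omega
  exact hgap.elim (disjoint_shell S) fun h => (disjoint_shell S h).symm

variable {S}

lemma iUnion_shell (hS : ∀ i, closure (S i) ⊆ interior (S (i + 1))) :
    ⋃ i, shell S i = ⋃ i, S i := by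
  classical
  refine (iUnion_mono (shell_subset S)).antisymm (iUnion_subset fun i z hz => ?_)
  have hex : ∃ k, z ∈ interior (S k) := ⟨i + 1, hS i (subset_closure hz)⟩
  refine mem_iUnion.2 ⟨Nat.find hex, Nat.find_spec hex, fun hz' => ?_⟩
  obtain ⟨k, hk, hzk⟩ := mem_iUnion₂.1 hz'
  exact Nat.find_min hex (m := k + 1) hk (hS k hzk)

end Shell

theorem tc_increasing_union_le_general {X ι : Type*} [TopologicalSpace X] (A : ℕ → Set X)
    (hA : ∀ i, closure (A i) ⊆ interior (A (i + 1))) (hunion : ⋃ i, A i = univ)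
    (hTC : ∀ i, HasCompressibleCover ι (univ : Set (A i × A i))) :
    HasCompressibleCover (Fin 2 × ι) (univ : Set (X × X)) := by
  let S (i : ℕ) : Set (X × X) := A i ×ˢ A i
  have hS (i : ℕ) : closure (S i) ⊆ interior (S (i + 1)) := by
    rw [closure_prod_eq, interior_prod_eq]
    exact prod_mono (hA i) (hA i)
  have hmono : Monotone A :=
    monotone_nat_of_le_succ fun i => subset_closure.trans ((hA i).trans interior_subset)
  have hcover : ⋃ i, shell S i = univ := by
    rw [iUnion_shell hS, iUnion_prod_of_monotone hmono hmono, hunion, univ_prod_univ]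
  have hshell (i : ℕ) : HasCompressibleCover ι (shell S i) := by
    refine .of_isInducing .subtypeVal (hTC i) (isOpen_shell S i) ?_
    rw [range_prodMap, Subtype.range_coe]
    exact shell_subset S i
  rw [← hcover]
  exact .iUnion_of_coloring (Fin.ofNat 2)
    (fun _ _ hne hmod => disjoint_shell_of_modEq_two S hne (Fin.val_eq_of_eq hmod)) hshell

/-- If `X = ⋃ᵢ Xᵢ` is an increasing union of closed subspaces such that for each `i` there is
an open `Yᵢ` with `Xᵢ ⊆ Yᵢ ⊆ cl(Yᵢ) ⊆ int(Xᵢ₊₁)`, and each `Xᵢ × Xᵢ` admits an open cover by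
`n` sets vertically compressible to the diagonal of `Xᵢ` (i.e. `TC(Xᵢ) ≤ n`), then `X × X`
admits an open cover by `2n` sets vertically compressible to the diagonal `Δ(X)`
(i.e. `TC(X) ≤ 2n`). -/
theorem tc_increasing_union_le {X : Type*} [TopologicalSpace X] (A : ℕ → Set X)
    (hclosed : ∀ i, IsClosed (A i))
    (hmono : ∀ i, A i ⊆ A (i + 1))
    (hunion : (⋃ i, A i) = Set.univ)
    (hY : ∀ i, ∃ Y : Set X, IsOpen Y ∧ A i ⊆ Y ∧ closure Y ⊆ interior (A (i + 1)))
    (n : ℕ) (hn : 0 < n)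
    (hTC : ∀ i, ∃ U : Fin n → Set (A i × A i),
      (∀ j, IsOpen (U j)) ∧ ((⋃ j, U j) = Set.univ) ∧ ∀ j, VerticallyCompressible (U j)) :
    ∃ W : Fin (2 * n) → Set (X × X),
      (∀ k, IsOpen (W k)) ∧ ((⋃ k, W k) = Set.univ) ∧ ∀ k, VerticallyCompressible (W k) :=
  (tc_increasing_union_le_general A
    (fun i => let ⟨_, _, hAY, hYA⟩ := hY i; (closure_mono hAY).trans hYA)
    hunion hTC).reindex finProdFinEquiv
end

section
/- Let p : E → B be a continuous map of topological spaces with a continuous section s : B → E (so p ∘ s = id_B). Suppose E = ⋃_{i=1}^∞ E_i is an increasing union of closed subspaces E_i ⊆ E_{i+1} such that s(p(E_i)) ⊆ E_i for every i, and such that for each i there exists an open set Y_i ⊆ E with E_i ⊆ Y_i and cl(Y_i) ⊆ int(E_{i+1}). Let n be a positive integer and suppose that for every i the subspace E_i can be covered by n sets U_1^{(i)}, …, U_n^{(i)}, each open in E_i, such that for each j there is a continuous homotopy H_j^{(i)} : U_j^{(i)} × [0,1] → E_i with H_j^{(i)}(e,0) = e, p(H_j^{(i)}(e,t)) = p(e)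 for all t, and H_j^{(i)}(e,1) = s(p(e)). Then E can be covered by 2n open subsets W_1, …, W_{2n} of E such that for each k there is a continuous homotopy H_k : W_k × [0,1] → E with H_k(e,0) = e, p(H_k(e,t)) = p(e) for all t, and H_k(e,1) = s(p(e)). -/
open unitInterval

/-!
The shells `int Eᵢ₊₁ \ ⋃ k < i, cl Eₖ` form an open cover of `E`, and two of them can only meet if
their indices differ by at most one. Colour them by the parity of their index: distinct shells of
the same colour are disjoint, so homotopies chosen on them independently glue. The `n` compressible
sets covering `Eᵢ₊₁ ⊇ shell i` thus yield `n` compressible sets for each of the two colours.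
-/

open Set Topology Function

section

variable {E B ι κ γ : Type*} [TopologicalSpace E] {p : E → B} {s : B → E}

/-- The set `W` can be deformed in `E`, along the fibres of `p`, onto the section `s`. The homotopy
is encoded as a function on all of `E × I`, of which only the values over `W` matter. -/
def IsFibrewiseCompressible (p : E → B) (s : B → E) (W : Set E) : Prop :=
  ∃ H : E × I → E, ContinuousOn H (W ×ˢ univ) ∧ (∀ e ∈ W, H (e, 0) = e) ∧
    (∀ e ∈ W, ∀ t, p (H (e, t)) = p e) ∧ ∀ e ∈ W, H (e, 1) = s (p e)

/-- The set `S` is covered by relatively open subsets indexed by `ι`, each fibrewise compressible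
to the section in `E`; for `S = E` and `ι = Fin n` this says `cat*_B(E) ≤ n`. Relatively open
subsets of `S` are encoded as traces `S ∩ U j` of open subsets of `E`. -/
def HasFibrewiseCompressibleCover (p : E → B) (s : B → E) (S : Set E) (ι : Type*) : Prop :=
  ∃ U : ι → Set E, (∀ j, IsOpen (U j)) ∧ S ⊆ ⋃ j, U j ∧
    ∀ j, IsFibrewiseCompressible p s (S ∩ U j)

namespace IsFibrewiseCompressible

theorem mono {V W : Set E} (hW : IsFibrewiseCompressible p s W) (hVW : V ⊆ W) :
    IsFibrewiseCompressible p s V := by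
  obtain ⟨H, hH, hzero, hfib, hone⟩ := hW
  exact ⟨H, hH.mono (prod_mono_left hVW), fun e he => hzero e (hVW he),
    fun e he => hfib e (hVW he), fun e he => hone e (hVW he)⟩

theorem range_of_isEmbedding {Z : Type*} [TopologicalSpace Z] {f : Z → E} (hf : IsEmbedding f)
    {H : Z × I → E} (hH : Continuous H) (hzero : ∀ z, H (z, 0) = f z)
    (hfib : ∀ z t, p (H (z, t)) = p (f z)) (hone : ∀ z, H (z, 1) = s (p (f z))) :
    IsFibrewiseCompressible p s (range f) := by
  have hf' : IsEmbedding (Prod.map f (id : I → I)) := hf.prodMap .id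
  let G : E × I → E := extend (Prod.map f id) H Prod.fst
  have hG : ∀ z t, G (f z, t) = H (z, t) := fun z t => hf'.injective.extend_apply H _ (z, t)
  refine ⟨G, ?_, ?_, ?_, ?_⟩
  · have hrange : range f ×ˢ univ = Prod.map f (id : I → I) '' univ := by
      rw [image_univ, range_prodMap, range_id]
    rw [hrange, hf'.isInducing.continuousOn_image_iff]
    exact hH.continuousOn.congr fun x _ => hG x.1 x.2
  · rintro _ ⟨z, rfl⟩
    rw [hG, hzero]
  · rintro _ ⟨z, rfl⟩ t
    rw [hG, hfib]
  · rintro _ ⟨z, rfl⟩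
    rw [hG, hone]

theorem image_val {S : Set E} {U : Set S} {H : U × I → E} (hH : Continuous H)
    (hzero : ∀ e : U, H (e, 0) = e) (hfib : ∀ (e : U) t, p (H (e, t)) = p e)
    (hone : ∀ e : U, H (e, 1) = s (p e)) :
    IsFibrewiseCompressible p s (Subtype.val '' U) := by
  rw [image_eq_range]
  exact range_of_isEmbedding (IsEmbedding.subtypeVal.comp .subtypeVal) hH hzero hfib hone

theorem iUnion_of_pairwise_disjoint {W : κ → Set E} (hopen : ∀ i, IsOpen (W i))
    (hdisj : Pairwise (Disjoint on W)) (hW : ∀ i, IsFibrewiseCompressible p s (W i)) :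
    IsFibrewiseCompressible p s (⋃ i, W i) := by
  classical
  choose H hH hzero hfib hone using hW
  let G : E × I → E := fun x => if hx : ∃ i, x.1 ∈ W i then H hx.choose x else x.1
  have hG : ∀ i, ∀ e ∈ W i, ∀ t, G (e, t) = H i (e, t) := by
    intro i e he t
    have hex : ∃ i, e ∈ W i := ⟨i, he⟩
    have hi : hex.choose = i := hdisj.eq (not_disjoint_iff.2 ⟨e, hex.choose_spec, he⟩)
    calc
      G (e, t) = H hex.choose (e, t) := dif_pos hex
      _ = H i (e, t) := by rw [hi]
  refine ⟨G, ?_, ?_, ?_, ?_⟩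
  · rw [iUnion_prod_const]
    refine ContinuousOn.iUnion_of_isOpen (fun i => ?_) fun i => (hopen i).prod isOpen_univ
    exact (hH i).congr fun x hx => hG i x.1 hx.1 x.2
  · intro e he
    obtain ⟨i, hi⟩ := mem_iUnion.1 he
    rw [hG i e hi, hzero i e hi]
  · intro e he t
    obtain ⟨i, hi⟩ := mem_iUnion.1 he
    rw [hG i e hi, hfib i e hi]
  · intro e he
    obtain ⟨i, hi⟩ := mem_iUnion.1 he
    rw [hG i e hi, hone i e hi]

theorem exists_homotopy {W : Set E} (hW : IsFibrewiseCompressible p s W) :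
    ∃ H : W × I → E, Continuous H ∧ (∀ e : W, H (e, 0) = e) ∧
      (∀ (e : W) (t : I), p (H (e, t)) = p e) ∧ ∀ e : W, H (e, 1) = s (p e) := by
  obtain ⟨H, hH, hzero, hfib, hone⟩ := hW
  exact ⟨fun x => H (x.1, x.2), hH.comp_continuous (by fun_prop) fun x => ⟨x.1.2, mem_univ _⟩,
    fun e => hzero e e.2, fun e => hfib e e.2, fun e => hone e e.2⟩

end IsFibrewiseCompressible

namespace HasFibrewiseCompressibleCover

theorem mono {S T : Set E} (hT : HasFibrewiseCompressibleCover p s T ι) (hST : S ⊆ T) :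
    HasFibrewiseCompressibleCover p s S ι := by
  obtain ⟨U, hopen, hcover, hU⟩ := hT
  exact ⟨U, hopen, hST.trans hcover, fun j => (hU j).mono (inter_subset_inter_left _ hST)⟩

theorem reindex (e : κ ≃ ι) {S : Set E} (hS : HasFibrewiseCompressibleCover p s S ι) :
    HasFibrewiseCompressibleCover p s S κ := by
  obtain ⟨U, hopen, hcover, hU⟩ := hS
  exact ⟨U ∘ e, fun k => hopen (e k), hcover.trans_eq (e.surjective.iUnion_comp U).symm,
    fun k => hU (e k)⟩

theorem of_subtype {S : Set E} {U : ι → Set S} (hopen : ∀ j, IsOpen (U j))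
    (hcover : ⋃ j, U j = univ) (hU : ∀ j, IsFibrewiseCompressible p s (Subtype.val '' U j)) :
    HasFibrewiseCompressibleCover p s S ι := by
  choose O hO hOU using fun j => isOpen_induced_iff.1 (hopen j)
  refine ⟨O, hO, fun e he => ?_, fun j => ?_⟩
  · obtain ⟨j, hj⟩ := mem_iUnion.1 (hcover ▸ mem_univ (⟨e, he⟩ : S))
    rw [← hOU j] at hj
    exact mem_iUnion.2 ⟨j, hj⟩
  · rw [← Subtype.image_preimage_coe, hOU]
    exact hU j

theorem iUnion_of_coloring {V : κ → Set E} (hopen : ∀ i, IsOpen (V i)) (c : κ → γ)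
    (hdisj : ∀ i j, i ≠ j → c i = c j → Disjoint (V i) (V j))
    (hV : ∀ i, HasFibrewiseCompressibleCover p s (V i) ι) :
    HasFibrewiseCompressibleCover p s (⋃ i, V i) (γ × ι) := by
  choose U hUopen hUcover hU using hV
  refine ⟨fun q => ⋃ i : {i // c i = q.1}, V i ∩ U i q.2, fun q => ?_, ?_, fun q => ?_⟩
  · exact isOpen_iUnion fun i => (hopen i).inter (hUopen i q.2)
  · refine iUnion_subset fun i e he => ?_
    obtain ⟨j, hj⟩ := mem_iUnion.1 (hUcover i he)
    exact mem_iUnion.2 ⟨(c i, j), mem_iUnion.2 ⟨⟨i, rfl⟩, he, hj⟩⟩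
  · have hdisj' : Pairwise (Disjoint on fun i : {i // c i = q.1} => V i ∩ U i q.2) :=
      fun i j hij => (hdisj i j (Subtype.coe_injective.ne hij) (i.2.trans j.2.symm)).mono
        inter_subset_left inter_subset_left
    have hglued : IsFibrewiseCompressible p s (⋃ i : {i // c i = q.1}, V i ∩ U i q.2) :=
      .iUnion_of_pairwise_disjoint (fun i => (hopen i).inter (hUopen i q.2)) hdisj'
        fun i => hU i q.2
    exact hglued.mono inter_subset_right

end HasFibrewiseCompressibleCover

/-- The part of the interior of `A (i + 1)` lying outside the closures of `A 0, …, A (i - 1)`. These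
sets refine an increasing union to an open cover in which only consecutive members can meet. -/
def openShell (A : ℕ → Set E) (i : ℕ) : Set E :=
  interior (A (i + 1)) \ ⋃ k < i, closure (A k)

theorem isOpen_openShell (A : ℕ → Set E) (i : ℕ) : IsOpen (openShell A i) :=
  isOpen_interior.sdiff ((finite_lt_nat i).isClosed_biUnion fun _ _ => isClosed_closure)

theorem openShell_subset (A : ℕ → Set E) (i : ℕ) : openShell A i ⊆ A (i + 1) :=
  sdiff_subset.trans interior_subset

theorem disjoint_openShell (A : ℕ → Set E) {i j : ℕ} (hij : i + 1 < j) :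
    Disjoint (openShell A i) (openShell A j) :=
  disjoint_left.2 fun _ hi hj =>
    hj.2 (mem_biUnion hij (subset_closure (openShell_subset A i hi)))

theorem iUnion_openShell {A : ℕ → Set E} (hA : ∀ i, closure (A i) ⊆ interior (A (i + 1))) :
    ⋃ i, openShell A i = ⋃ i, A i := by
  classical
  apply Subset.antisymm
  · exact iUnion_subset fun i => (openShell_subset A i).trans (subset_iUnion A (i + 1))
  · refine iUnion_subset fun i e he => ?_
    have hex : ∃ k, e ∈ closure (A k) := ⟨i, subset_closure he⟩
    refine mem_iUnion.2 ⟨Nat.find hex, hA _ (Nat.find_spec hex), ?_⟩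
    simp only [mem_iUnion, not_exists]
    exact fun k hk => Nat.find_min hex hk

theorem fibrewise_cat_increasing_union_le_general {A : ℕ → Set E}
    (hA : ∀ i, closure (A i) ⊆ interior (A (i + 1))) (hunion : ⋃ i, A i = univ)
    (hcat : ∀ i, HasFibrewiseCompressibleCover p s (A i) ι) :
    HasFibrewiseCompressibleCover p s univ (Fin 2 × ι) := by
  have hparity : ∀ i j, i ≠ j → Fin.ofNat 2 i = Fin.ofNat 2 j →
      Disjoint (openShell A i) (openShell A j) := by
    intro i j hne hmod
    replace hmod : i % 2 = j % 2 := congrArg Fin.val hmod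
    obtain hij | hji : i + 1 < j ∨ j + 1 < i := by omega
    · exact disjoint_openShell A hij
    · exact (disjoint_openShell A hji).symm
  rw [← hunion, ← iUnion_openShell hA]
  exact .iUnion_of_coloring (isOpen_openShell A) (Fin.ofNat 2) hparity
    fun i => (hcat (i + 1)).mono (openShell_subset A i)

end

/-- Fibrewise version: if `E = ⋃ᵢ Eᵢ` is an increasing union of closed subspaces of a
fibrewise pointed space `p : E → B` with section `s`, with `s(p(Eᵢ)) ⊆ Eᵢ`, interlacing open
sets `Yᵢ` with `Eᵢ ⊆ Yᵢ ⊆ cl(Yᵢ) ⊆ int(Eᵢ₊₁)`, and each `Eᵢ` admits an open cover by `n` sets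
fibrewise compressible to the section within `Eᵢ` (i.e. `cat*_{Bᵢ}(Eᵢ) ≤ n`), then `E` admits
an open cover by `2n` sets fibrewise compressible to the section (i.e. `cat*_B(E) ≤ 2n`). -/
theorem fibrewise_cat_increasing_union_le {E B : Type*} [TopologicalSpace E]
    [TopologicalSpace B] (p : E → B) (s : B → E) (hp : Continuous p) (hs : Continuous s)
    (hsec : ∀ b, p (s b) = b)
    (A : ℕ → Set E)
    (hclosed : ∀ i, IsClosed (A i))
    (hmono : ∀ i, A i ⊆ A (i + 1))
    (hunion : (⋃ i, A i) = Set.univ)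
    (hsA : ∀ i, ∀ e ∈ A i, s (p e) ∈ A i)
    (hY : ∀ i, ∃ Y : Set E, IsOpen Y ∧ A i ⊆ Y ∧ closure Y ⊆ interior (A (i + 1)))
    (n : ℕ) (hn : 0 < n)
    (hcat : ∀ i, ∃ U : Fin n → Set (A i),
      (∀ j, IsOpen (U j)) ∧ ((⋃ j, U j) = Set.univ) ∧
      ∀ j, ∃ H : U j × I → A i, Continuous H ∧
        (∀ e : U j, (H (e, 0) : E) = ((e : A i) : E)) ∧
        (∀ (e : U j) (t : I), p (H (e, t) : E) = p ((e : A i) : E)) ∧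
        (∀ e : U j, (H (e, 1) : E) = s (p ((e : A i) : E)))) :
    ∃ W : Fin (2 * n) → Set E,
      (∀ k, IsOpen (W k)) ∧ ((⋃ k, W k) = Set.univ) ∧
      ∀ k, ∃ H : W k × I → E, Continuous H ∧
        (∀ e : W k, H (e, 0) = (e : E)) ∧
        (∀ (e : W k) (t : I), p (H (e, t)) = p (e : E)) ∧
        (∀ e : W k, H (e, 1) = s (p (e : E))) := by
  have hA : ∀ i, closure (A i) ⊆ interior (A (i + 1)) := fun i =>
    let ⟨_, _, hAY, hYA⟩ := hY i
    (closure_mono hAY).trans hYA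
  have hcover : ∀ i, HasFibrewiseCompressibleCover p s (A i) (Fin n) := by
    intro i
    obtain ⟨U, hopen, hUcover, hU⟩ := hcat i
    refine .of_subtype hopen hUcover fun j => ?_
    obtain ⟨H, hH, hzero, hfib, hone⟩ := hU j
    exact .image_val (continuous_subtype_val.comp hH) hzero hfib hone
  obtain ⟨W, hopen, hWcover, hW⟩ :=
    (fibrewise_cat_increasing_union_le_general hA hunion hcover).reindex finProdFinEquiv.symm
  exact ⟨W, hopen, univ_subset_iff.1 hWcover,
    fun k => ((hW k).mono (subset_inter (subset_univ _) Subset.rfl)).exists_homotopy⟩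
end

section
/- Let X be a topological space with subsets X_i (i ≥ 1) satisfying X_i ⊆ X_{i+1}, and open sets Y_i ⊆ X with X_i ⊆ Y_i and cl(Y_i) ⊆ int(X_{i+1}) for every i. Define subsets of X × X by L_1 = int(X_1 × X_1), L_2 = int(X_2 × X_2), and L_i = int(X_i × X_i) \ cl(Y_{i-2} × Y_{i-2}) for i > 2 (interiors and closures taken in X × X). Then for all positive integers l and m with |l − m| ≥ 2 the sets L_l and L_m are disjoint. -/
theorem disjoint_of_monotoneOn_of_disjoint_add {α : Type*} [PartialOrder α] [OrderBot α]
    {S T L : ℕ → α} {k d : ℕ} (hS : MonotoneOn S (Set.Ici k)) (hST : ∀ i, k ≤ i → S i ≤ T i)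
    (hLS : ∀ i, k ≤ i → L i ≤ S i) (hTL : ∀ i, k ≤ i → Disjoint (T i) (L (i + d)))
    {l m : ℕ} (hl : k ≤ l) (hlm : l + d ≤ m) :
    Disjoint (L l) (L m) := by
  obtain ⟨j, rfl⟩ : ∃ j, m = j + d := ⟨m - d, by omega⟩
  have hlj : l ≤ j := Nat.le_of_add_le_add_right hlm
  have hj : k ≤ j := hl.trans hlj
  have hLj : L l ≤ T j := calc
    L l ≤ S l := hLS l hl
    _ ≤ S j := hS hl hj hlj
    _ ≤ T j := hST j hj
  exact (hTL j hj).mono_left hLj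

theorem L_disjoint_general {Z : Type*} [TopologicalSpace Z] {S T L : ℕ → Set Z}
    (hS : ∀ i, 1 ≤ i → S i ⊆ S (i + 1)) (hST : ∀ i, 1 ≤ i → S i ⊆ T i)
    (hL1 : L 1 = interior (S 1)) (hL2 : L 2 = interior (S 2))
    (hLi : ∀ i, 2 < i → L i = interior (S i) \ closure (T (i - 2)))
    {l m : ℕ} (hl : 1 ≤ l) (hm : 1 ≤ m) (hlm : l + 2 ≤ m ∨ m + 2 ≤ l) :
    L l ∩ L m = ∅ := by
  have hSmono : MonotoneOn S (Set.Ici 1) := monotoneOn_nat_Ici_of_le_succ hS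
  have hLS : ∀ i, 1 ≤ i → L i ⊆ S i := by
    intro i hi
    obtain rfl | rfl | hi2 : i = 1 ∨ i = 2 ∨ 2 < i := by omega
    · exact hL1.trans_subset interior_subset
    · exact hL2.trans_subset interior_subset
    · exact (hLi i hi2).trans_subset (Set.sdiff_subset.trans interior_subset)
  have hTL : ∀ i, 1 ≤ i → Disjoint (T i) (L (i + 2)) := by
    intro i hi
    rw [hLi (i + 2) (by omega), Nat.add_sub_cancel]
    exact Set.disjoint_sdiff_right.mono_left subset_closure
  rw [← Set.disjoint_iff_inter_eq_empty]
  rcases hlm with hlm | hml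
  · exact disjoint_of_monotoneOn_of_disjoint_add hSmono hST hLS hTL hl hlm
  · exact (disjoint_of_monotoneOn_of_disjoint_add hSmono hST hLS hTL hm hml).symm

/-- With `Xᵢ ⊆ Yᵢ ⊆ cl(Yᵢ) ⊆ int(Xᵢ₊₁)` and `L₁ = int(X₁ × X₁)`, `L₂ = int(X₂ × X₂)`,
`Lᵢ = int(Xᵢ × Xᵢ) \ cl(Yᵢ₋₂ × Yᵢ₋₂)` for `i > 2` (interiors and closures taken in `X × X`),
the sets `Lₗ` and `Lₘ` are disjoint whenever `|l − m| ≥ 2`. -/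
theorem L_disjoint {X : Type*} [TopologicalSpace X] (A Y : ℕ → Set X)
    (hmono : ∀ i, 1 ≤ i → A i ⊆ A (i + 1))
    (hYopen : ∀ i, 1 ≤ i → IsOpen (Y i))
    (hAY : ∀ i, 1 ≤ i → A i ⊆ Y i)
    (hYA : ∀ i, 1 ≤ i → closure (Y i) ⊆ interior (A (i + 1)))
    (L : ℕ → Set (X × X))
    (hL1 : L 1 = interior (A 1 ×ˢ A 1))
    (hL2 : L 2 = interior (A 2 ×ˢ A 2))
    (hLi : ∀ i, 2 < i → L i = interior (A i ×ˢ A i) \ closure (Y (i - 2) ×ˢ Y (i - 2)))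
    (l m : ℕ) (hl : 1 ≤ l) (hm : 1 ≤ m) (hlm : l + 2 ≤ m ∨ m + 2 ≤ l) :
    L l ∩ L m = ∅ :=
  L_disjoint_general (T := fun i ↦ Y i ×ˢ Y i) (fun i hi ↦ Set.prod_mono (hmono i hi) (hmono i hi))
    (fun i hi ↦ Set.prod_mono (hAY i hi) (hAY i hi)) hL1 hL2 hLi hl hm hlm
end

section
/- Let X be a topological space which is the increasing union X = ⋃_{i=1}^∞ X_i of subsets X_i ⊆ X_{i+1}, and suppose for each i there exists an open set Y_i ⊆ X with X_i ⊆ Y_i and cl(Y_i) ⊆ int(X_{i+1}). Define subsets of X × X by L_1 = int(X_1 × X_1), L_2 = int(X_2 × X_2), and L_i = int(X_i × X_i) \ cl(Y_{i-2} × Y_{i-2}) for i > 2 (interiors and closures taken in X × X). Then the sets L_i cover X × X: every point (x,y) ∈ X × X belongs to L_i for some i. -/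
/-!
Since `A i ⊆ Y i ⊆ int (A (i + 1))`, the open sets `int (A i × A i)` cover `X × X`. Take the least
`n ≥ 1` with `p ∈ int (A n × A n)`. If `n > 2`, then `p ∉ cl (Y (n - 2) × Y (n - 2))`, because this
closure lies in `int (A (n - 1) × A (n - 1))`, which misses `p` by minimality of `n`.
-/

theorem exists_mem_forall_notMem_of_subset_succ {α : Type*} {U F : ℕ → Set α} {m : ℕ}
    (hFU : ∀ i, m ≤ i → F i ⊆ U (i + 1)) {x : α} (hx : ∃ i, m ≤ i ∧ x ∈ U i) :
    ∃ n, m ≤ n ∧ x ∈ U n ∧ ∀ k, m ≤ k → k + 1 < n → x ∉ F k := by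
  classical
  obtain ⟨hmn, hxn⟩ := Nat.find_spec hx
  exact ⟨Nat.find hx, hmn, hxn, fun k hk hkn hxk =>
    Nat.find_min hx hkn ⟨Nat.le_succ_of_le hk, hFU k hk hxk⟩⟩

/-- The sets `A 1 ⊆ A 2 ⊆ ⋯` exhaust `X` by their interiors, and each `Y i` has its closure in the
interior of the next set `A (i + 1)`. Indices start at `1`; `A 0` and `Y 0` are unconstrained. -/
structure IsInterlacedExhaustion {X : Type*} [TopologicalSpace X] (A Y : ℕ → Set X) : Prop where
  monotoneOn : MonotoneOn A (Set.Ici 1)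
  exists_mem_interior : ∀ x, ∃ i, 1 ≤ i ∧ x ∈ interior (A i)
  closure_subset_interior : ∀ i, 1 ≤ i → closure (Y i) ⊆ interior (A (i + 1))

namespace IsInterlacedExhaustion

variable {X Z : Type*} [TopologicalSpace X] [TopologicalSpace Z]
  {A Y : ℕ → Set X} {B V : ℕ → Set Z}

theorem of_subset (hunion : (⋃ i, ⋃ (_ : 1 ≤ i), A i) = Set.univ)
    (hAY : ∀ i, 1 ≤ i → A i ⊆ Y i)
    (hYA : ∀ i, 1 ≤ i → closure (Y i) ⊆ interior (A (i + 1))) :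
    IsInterlacedExhaustion A Y := by
  have subset_interior_succ (i : ℕ) (hi : 1 ≤ i) : A i ⊆ interior (A (i + 1)) :=
    (hAY i hi).trans (subset_closure.trans (hYA i hi))
  refine ⟨?_, fun x => ?_, hYA⟩
  · exact monotoneOn_of_le_succ Set.ordConnected_Ici fun i _ hi _ =>
      (subset_interior_succ i hi).trans interior_subset
  · obtain ⟨i, hi, hx⟩ := Set.mem_iUnion₂.mp (hunion.symm ▸ Set.mem_univ x)
    exact ⟨i + 1, Nat.le_succ_of_le hi, subset_interior_succ i hi hx⟩

theorem exists_mem_interior_prod (hA : IsInterlacedExhaustion A Y)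
    (hB : IsInterlacedExhaustion B V) (p : X × Z) :
    ∃ i, 1 ≤ i ∧ p ∈ interior (A i ×ˢ B i) := by
  obtain ⟨i, hi, hpA⟩ := hA.exists_mem_interior p.1
  obtain ⟨j, hj, hpB⟩ := hB.exists_mem_interior p.2
  have hmax : 1 ≤ max i j := le_max_of_le_left hi
  refine ⟨max i j, hmax, ?_⟩
  rw [interior_prod_eq]
  exact ⟨interior_mono (hA.monotoneOn hi hmax (le_max_left i j)) hpA,
    interior_mono (hB.monotoneOn hj hmax (le_max_right i j)) hpB⟩

theorem closure_prod_subset_interior_prod (hA : IsInterlacedExhaustion A Y)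
    (hB : IsInterlacedExhaustion B V) (i : ℕ) (hi : 1 ≤ i) :
    closure (Y i ×ˢ V i) ⊆ interior (A (i + 1) ×ˢ B (i + 1)) := by
  rw [closure_prod_eq, interior_prod_eq]
  exact Set.prod_mono (hA.closure_subset_interior i hi) (hB.closure_subset_interior i hi)

end IsInterlacedExhaustion

theorem L_covers_general {X Z : Type*} [TopologicalSpace X] [TopologicalSpace Z]
    {A Y : ℕ → Set X} {B V : ℕ → Set Z}
    (hA : IsInterlacedExhaustion A Y) (hB : IsInterlacedExhaustion B V)
    (L : ℕ → Set (X × Z))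
    (hL1 : L 1 = interior (A 1 ×ˢ B 1))
    (hL2 : L 2 = interior (A 2 ×ˢ B 2))
    (hLi : ∀ i, 2 < i → L i = interior (A i ×ˢ B i) \ closure (Y (i - 2) ×ˢ V (i - 2))) :
    ∀ p : X × Z, ∃ i, 1 ≤ i ∧ p ∈ L i := by
  intro p
  obtain ⟨n, hn, hpn, hp_notMem⟩ := exists_mem_forall_notMem_of_subset_succ
    (hA.closure_prod_subset_interior_prod hB) (U := fun i => interior (A i ×ˢ B i))
    (hA.exists_mem_interior_prod hB p)
  refine ⟨n, hn, ?_⟩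
  obtain rfl | rfl | hn2 : n = 1 ∨ n = 2 ∨ 2 < n := by omega
  · rwa [hL1]
  · rwa [hL2]
  · rw [hLi n hn2]
    exact ⟨hpn, hp_notMem (n - 2) (by omega) (by omega)⟩

/-- If `X = ⋃_{i ≥ 1} Xᵢ` with `Xᵢ ⊆ Yᵢ ⊆ cl(Yᵢ) ⊆ int(Xᵢ₊₁)`, then the sets
`L₁ = int(X₁ × X₁)`, `L₂ = int(X₂ × X₂)`, `Lᵢ = int(Xᵢ × Xᵢ) \ cl(Yᵢ₋₂ × Yᵢ₋₂)` for `i > 2`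
(interiors and closures taken in `X × X`) cover `X × X`. -/
theorem L_covers {X : Type*} [TopologicalSpace X] (A Y : ℕ → Set X)
    (hmono : ∀ i, 1 ≤ i → A i ⊆ A (i + 1))
    (hunion : (⋃ i, ⋃ (_ : 1 ≤ i), A i) = Set.univ)
    (hYopen : ∀ i, 1 ≤ i → IsOpen (Y i))
    (hAY : ∀ i, 1 ≤ i → A i ⊆ Y i)
    (hYA : ∀ i, 1 ≤ i → closure (Y i) ⊆ interior (A (i + 1)))
    (L : ℕ → Set (X × X))
    (hL1 : L 1 = interior (A 1 ×ˢ A 1))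
    (hL2 : L 2 = interior (A 2 ×ˢ A 2))
    (hLi : ∀ i, 2 < i → L i = interior (A i ×ˢ A i) \ closure (Y (i - 2) ×ˢ Y (i - 2))) :
    ∀ p : X × X, ∃ i, 1 ≤ i ∧ p ∈ L i := by
  have hA : IsInterlacedExhaustion A Y := .of_subset hunion hAY hYA
  exact L_covers_general hA hA L hL1 hL2 hLi
end

section
/- Let X and Y be topological spaces and let f : X → Y be a homotopy equivalence. Let n be a positive integer and suppose Y × Y can be covered by n open sets, each vertically compressible to the diagonal Δ(Y). Then X × X can be covered by n open sets, each vertically compressible to the diagonal Δ(X). -/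
open unitInterval

/-!
A set `U ⊆ X × X` is vertically compressible exactly when the two projections `U → X` are
homotopic. Over the preimage of `U ⊆ Y × Y` under `f × f`, the composites of `f` with the two
projections to `X` are therefore homotopic, and a left homotopy inverse of `f` cancels `f`.
-/

section

variable {X Y Z : Type*} [TopologicalSpace X] [TopologicalSpace Y] [TopologicalSpace Z]

theorem verticallyCompressible_iff_homotopic {U : Set (X × X)} :
    VerticallyCompressible U ↔
      (ContinuousMap.snd.restrict U).Homotopic (ContinuousMap.fst.restrict U) := by
  constructor
  · rintro ⟨h, h_cont, h_zero, h_one⟩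
    exact ⟨{ toFun := fun q => h q.swap
             continuous_toFun := h_cont.comp continuous_swap
             map_zero_left := h_zero
             map_one_left := h_one }⟩
  · rintro ⟨F⟩
    exact ⟨fun q => F q.swap, F.continuous.comp continuous_swap, F.apply_zero, F.apply_one⟩

theorem VerticallyCompressible.homotopic {U : Set (X × X)} (hU : VerticallyCompressible U)
    {a b : C(Z, X)} (hab : ∀ z, (a z, b z) ∈ U) : b.Homotopic a :=
  let ab : C(Z, U) := ⟨fun z => ⟨(a z, b z), hab z⟩, by fun_prop⟩
  (verticallyCompressible_iff_homotopic.1 hU).comp (.refl ab)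

theorem homotopic_of_homotopic_comp_left {f : C(X, Y)} {g : C(Y, X)}
    (hgf : (g.comp f).Homotopic (.id X)) {a b : C(Z, X)}
    (hab : (f.comp a).Homotopic (f.comp b)) : a.Homotopic b := by
  have cancel (c : C(Z, X)) : (g.comp (f.comp c)).Homotopic c := hgf.comp (.refl c)
  exact ((cancel a).symm.trans ((ContinuousMap.Homotopic.refl g).comp hab)).trans (cancel b)

theorem VerticallyCompressible.preimage_prodMap {f : C(X, Y)} {g : C(Y, X)}
    (hgf : (g.comp f).Homotopic (.id X)) {U : Set (Y × Y)} (hU : VerticallyCompressible U) :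
    VerticallyCompressible (Prod.map f f ⁻¹' U) :=
  verticallyCompressible_iff_homotopic.2 <|
    homotopic_of_homotopic_comp_left hgf <| hU.homotopic fun p => p.2

theorem tc_homotopy_invariant_general {f : C(X, Y)} {g : C(Y, X)}
    (hgf : (g.comp f).Homotopic (.id X)) {ι : Sort*}
    (hY : ∃ U : ι → Set (Y × Y),
      (∀ j, IsOpen (U j)) ∧ ((⋃ j, U j) = Set.univ) ∧ ∀ j, VerticallyCompressible (U j)) :
    ∃ U : ι → Set (X × X),
      (∀ j, IsOpen (U j)) ∧ ((⋃ j, U j) = Set.univ) ∧ ∀ j, VerticallyCompressible (U j) := by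
  obtain ⟨U, hU_open, hU_cover, hU⟩ := hY
  refine ⟨fun j => Prod.map f f ⁻¹' U j, fun j => ?_, ?_, fun j => (hU j).preimage_prodMap hgf⟩
  · exact (hU_open j).preimage (f.continuous.prodMap f.continuous)
  · rw [← Set.preimage_iUnion, hU_cover, Set.preimage_univ]

end

/-- Homotopy invariance of topological complexity in the Iwase–Sakai open-cover formulation:
if `f : X → Y` is a homotopy equivalence and `Y × Y` admits an open cover by `n` sets
vertically compressible to the diagonal `Δ(Y)`, then `X × X` admits an open cover by `n` sets
vertically compressible to the diagonal `Δ(X)`. -/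
theorem tc_homotopy_invariant {X Y : Type*} [TopologicalSpace X] [TopologicalSpace Y]
    (f : ContinuousMap.HomotopyEquiv X Y) (n : ℕ) (hn : 0 < n)
    (hY : ∃ U : Fin n → Set (Y × Y),
      (∀ j, IsOpen (U j)) ∧ ((⋃ j, U j) = Set.univ) ∧ ∀ j, VerticallyCompressible (U j)) :
    ∃ U : Fin n → Set (X × X),
      (∀ j, IsOpen (U j)) ∧ ((⋃ j, U j) = Set.univ) ∧ ∀ j, VerticallyCompressible (U j) :=
  tc_homotopy_invariant_general f.left_inv hY
end
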